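/- Complementation and double negation: for every formula F of gradual classical logic in unit chain expansion and every valuation frame M: [M ⊨ F ∨ recursiveReduce(F)] = 1, [M ⊨ F ∧ recursiveReduce(F)] = 0, and [M ⊨ F] = [M ⊨ recursiveReduce(recursiveReduce(F))]. -/

import Mathlib

/-!
Syntactic negation `recursiveReduce` computes the Boolean complement: for `F` in unit chain
expansion, `[M ⊨ recursiveReduce F] = 1 - [M ⊨ F]`, at every sequence `ψ` already traversed
(`valAux_recursiveReduce`). On a chain with head `x` and tail `T` this is the identity
`max (1 - a) (min a (1 - t)) = 1 - min a t` for `a, t ∈ {0, 1}`, where `a` is the local value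
of `x` and `t` the value of `T` after `x`; it applies because distributing `x ⋗ -` over `∧` and
`∨` does not change the value (`valAux_distOb`). Complementation is then immediate from
two-valuedness. For double negation the identity is used twice, which is legitimate because
`recursiveReduce` preserves unit chain expansion (`UCE.recursiveReduce`).
-/

namespace GradualLogic

/-- Elements of 𝒮 = 𝒜 ∪ {⊤, ⊥}. -/
inductive GS (A : Type) : Type
  | lit : A → GS A
  | top : GS A
  | bot : GS A

/-- Complement on 𝒮, given the involutive complement `c` on literals. -/
def GS.compl {A : Type} (c : A → A) : GS A → GS A
  | .lit a => .lit (c a)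
  | .top => .bot
  | .bot => .top

/-- Formulas of gradual classical logic: F ::= s | F ∧ F | F ∨ F | ¬F | F ⋗ F. -/
inductive GF (A : Type) : Type
  | base : GS A → GF A
  | conj : GF A → GF A → GF A
  | disj : GF A → GF A → GF A
  | neg  : GF A → GF A
  | obat : GF A → GF A → GF A

/-- One-step reduction (closure of the ¬- and ⋗-rules under subformula contexts). -/
inductive Step {A : Type} (c : A → A) : GF A → GF A → Prop
  | neg1 (x : GS A) :
      Step c (GF.neg (GF.base x)) (GF.base (GS.compl c x))
  | neg2 (F₁ F₂ : GF A) :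
      Step c (GF.neg (GF.conj F₁ F₂)) (GF.disj (GF.neg F₁) (GF.neg F₂))
  | neg3 (F₁ F₂ : GF A) :
      Step c (GF.neg (GF.disj F₁ F₂)) (GF.conj (GF.neg F₁) (GF.neg F₂))
  | neg4 (x : GS A) (F₂ : GF A) :
      Step c (GF.neg (GF.obat (GF.base x) F₂))
        (GF.disj (GF.base (GS.compl c x)) (GF.obat (GF.base x) (GF.neg F₂)))
  | ob1 (F₁ F₂ F₃ : GF A) :
      Step c (GF.obat (GF.obat F₁ F₂) F₃)
        (GF.conj (GF.obat F₁ F₃)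
          (GF.disj (GF.obat F₁ F₂) (GF.obat F₁ (GF.obat F₂ F₃))))
  | ob2 (F₁ F₂ F₃ : GF A) :
      Step c (GF.obat (GF.conj F₁ F₂) F₃) (GF.conj (GF.obat F₁ F₃) (GF.obat F₂ F₃))
  | ob3 (F₁ F₂ F₃ : GF A) :
      Step c (GF.obat (GF.disj F₁ F₂) F₃) (GF.disj (GF.obat F₁ F₃) (GF.obat F₂ F₃))
  | ob4 (F₁ F₂ F₃ : GF A) :
      Step c (GF.obat F₁ (GF.conj F₂ F₃)) (GF.conj (GF.obat F₁ F₂) (GF.obat F₁ F₃))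
  | ob5 (F₁ F₂ F₃ : GF A) :
      Step c (GF.obat F₁ (GF.disj F₂ F₃)) (GF.disj (GF.obat F₁ F₂) (GF.obat F₁ F₃))
  | conj_left {F F' : GF A} (G : GF A) :
      Step c F F' → Step c (GF.conj F G) (GF.conj F' G)
  | conj_right (F : GF A) {G G' : GF A} :
      Step c G G' → Step c (GF.conj F G) (GF.conj F G')
  | disj_left {F F' : GF A} (G : GF A) :
      Step c F F' → Step c (GF.disj F G) (GF.disj F' G)
  | disj_right (F : GF A) {G G' : GF A} :
      Step c G G' → Step c (GF.disj F G) (GF.disj F G')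
  | neg_congr {F F' : GF A} :
      Step c F F' → Step c (GF.neg F) (GF.neg F')
  | obat_left {F F' : GF A} (G : GF A) :
      Step c F F' → Step c (GF.obat F G) (GF.obat F' G)
  | obat_right (F : GF A) {G G' : GF A} :
      Step c G G' → Step c (GF.obat F G) (GF.obat F G')

/-- `Reduces c F G`: F ↦* G in finitely many (possibly zero) steps. -/
def Reduces {A : Type} (c : A → A) : GF A → GF A → Prop :=
  Relation.ReflTransGen (Step c)

/-- Unit chains s₀ ⋗ s₁ ⋗ ⋯ ⋗ s_{k+1} (right-associated, all components in 𝒮). -/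
inductive IsUnitChain {A : Type} : GF A → Prop
  | base (x y : GS A) : IsUnitChain (GF.obat (GF.base x) (GF.base y))
  | cons (x : GS A) {F : GF A} : IsUnitChain F → IsUnitChain (GF.obat (GF.base x) F)

/-- Unit chain expansion: built from elements of 𝒮 and unit chains using only ∧ and ∨. -/
inductive UCE {A : Type} : GF A → Prop
  | base (x : GS A) : UCE (GF.base x)
  | chain {F : GF A} : IsUnitChain F → UCE F
  | conj {F G : GF A} : UCE F → UCE G → UCE (GF.conj F G)
  | disj {F G : GF A} : UCE F → UCE G → UCE (GF.disj F G)

/-- Formulas in which ¬ does not occur. -/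
inductive NegFree {A : Type} : GF A → Prop
  | base (x : GS A) : NegFree (GF.base x)
  | conj {F G : GF A} : NegFree F → NegFree G → NegFree (GF.conj F G)
  | disj {F G : GF A} : NegFree F → NegFree G → NegFree (GF.disj F G)
  | obat {F G : GF A} : NegFree F → NegFree G → NegFree (GF.obat F G)

/-- A valuation frame (I, J): local interpretation I with the required conditions;
the global interpretation J is determined by I and is built into `Frame.val` below. -/
structure Frame (A : Type) (c : A → A) where
  I : List (GS A) → GS A → ℕ
  I01 : ∀ ψ x, I ψ x = 0 ∨ I ψ x = 1
  Itop : ∀ ψ, I ψ GS.top = 1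
  Ibot : ∀ ψ, I ψ GS.bot = 0
  Icompl : ∀ ψ x, I ψ (GS.compl c x) = 1 - I ψ x
  Isync : ∀ ψ ψ' x, ψ.length = ψ'.length → I ψ x = I ψ' x

/-- The valuation of a formula in unit chain expansion, relative to the sequence ψ of
𝒮-elements already traversed: a unit chain s₀ ⋗ ⋯ ⋗ s_k receives the global value
J(s₀.⋯.s_k) (the min of the local values along its prefixes), ∧ is min, ∨ is max.
(The value on formulas not in unit chain expansion is junk and never used.) -/
def Frame.valAux {A : Type} {c : A → A} (M : Frame A c) : List (GS A) → GF A → ℕ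
  | ψ, GF.base x => M.I ψ x
  | ψ, GF.conj F G => min (M.valAux ψ F) (M.valAux ψ G)
  | ψ, GF.disj F G => max (M.valAux ψ F) (M.valAux ψ G)
  | _, GF.neg _ => 0
  | ψ, GF.obat (GF.base x) G => min (M.I ψ x) (M.valAux (ψ ++ [x]) G)
  | _, GF.obat _ _ => 0

/-- `[M ⊨ F]` for F in unit chain expansion. -/
def Frame.val {A : Type} {c : A → A} (M : Frame A c) (F : GF A) : ℕ :=
  M.valAux [] F

/-- Distribute `s ⋗ -` over the ∧/∨-structure of a formula (the ⋗-reductions 4 and 5). -/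
def distOb {A : Type} (x : GS A) : GF A → GF A
  | GF.conj F G => GF.conj (distOb x F) (distOb x G)
  | GF.disj F G => GF.disj (distOb x F) (distOb x G)
  | F => GF.obat (GF.base x) F

/-- recursiveReduce on formulas in unit chain expansion: swap ∧/∨, complement the
non-chain 𝒮-elements, replace a chain with head s and tail T by
sᶜ ∨ (s ⋗ recursiveReduce T), reduced into unit chain expansion via ⋗-reductions. -/
def recursiveReduce {A : Type} (c : A → A) : GF A → GF A
  | GF.base x => GF.base (GS.compl c x)
  | GF.conj F G => GF.disj (recursiveReduce c F) (recursiveReduce c G)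
  | GF.disj F G => GF.conj (recursiveReduce c F) (recursiveReduce c G)
  | GF.obat (GF.base x) F =>
      GF.disj (GF.base (GS.compl c x)) (distOb x (recursiveReduce c F))
  | GF.obat F G => GF.obat F G
  | GF.neg F => GF.neg F

/-- Validity: every unit chain expansion that F reduces to receives value 1 in
every valuation frame. -/
def Valid {A : Type} (c : A → A) (F : GF A) : Prop :=
  ∀ (M : Frame A c) (G : GF A), UCE G → Reduces c F G → M.val G = 1

/-- The fifteen shape pairs of the bisimulation theorem. -/
inductive ShapePair {A : Type} (c : A → A) : GF A → GF A → Prop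
  | s1 (Fa Fb Fc : GF A) :
      ShapePair c (GF.obat (GF.conj Fa Fb) Fc) (GF.conj (GF.obat Fa Fc) (GF.obat Fb Fc))
  | s2 (Fa Fb Fc : GF A) :
      ShapePair c (GF.obat (GF.disj Fa Fb) Fc) (GF.disj (GF.obat Fa Fc) (GF.obat Fb Fc))
  | s3 (Fa Fb Fc : GF A) :
      ShapePair c (GF.obat Fa (GF.conj Fb Fc)) (GF.conj (GF.obat Fa Fb) (GF.obat Fa Fc))
  | s4 (Fa Fb Fc : GF A) :
      ShapePair c (GF.obat Fa (GF.disj Fb Fc)) (GF.disj (GF.obat Fa Fb) (GF.obat Fa Fc))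
  | s5 (Fa Fb Fc : GF A) :
      ShapePair c (GF.obat (GF.obat Fa Fb) Fc)
        (GF.conj (GF.obat Fa Fc) (GF.disj (GF.obat Fa Fb) (GF.obat Fa (GF.obat Fb Fc))))
  | s6 (x : GS A) :
      ShapePair c (GF.neg (GF.base x)) (GF.base (GS.compl c x))
  | s7 (F₁ F₂ : GF A) :
      ShapePair c (GF.neg (GF.conj F₁ F₂)) (GF.disj (GF.neg F₁) (GF.neg F₂))
  | s8 (F₁ F₂ : GF A) :
      ShapePair c (GF.neg (GF.disj F₁ F₂)) (GF.conj (GF.neg F₁) (GF.neg F₂))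
  | s9 (x : GS A) (F₂ : GF A) :
      ShapePair c (GF.neg (GF.obat (GF.base x) F₂))
        (GF.disj (GF.base (GS.compl c x)) (GF.obat (GF.base x) (GF.neg F₂)))
  | s10 (Fa : GF A) : ShapePair c (GF.disj Fa Fa) Fa
  | s11 (Fa : GF A) : ShapePair c (GF.conj Fa Fa) Fa
  | s12 (Fa Fb : GF A) : ShapePair c (GF.conj Fa Fb) (GF.conj Fb Fa)
  | s13 (Fa Fb : GF A) : ShapePair c (GF.disj Fa Fb) (GF.disj Fb Fa)
  | s14 (Fa Fb Fc : GF A) :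
      ShapePair c (GF.conj Fa (GF.conj Fb Fc)) (GF.conj (GF.conj Fa Fb) Fc)
  | s15 (Fa Fb Fc : GF A) :
      ShapePair c (GF.disj Fa (GF.disj Fb Fc)) (GF.disj (GF.disj Fa Fb) Fc)

/-- `ReplaceAt R F F'`: F' is obtained from F by replacing one occurrence of a
subformula related by R (in either direction). -/
inductive ReplaceAt {A : Type} (R : GF A → GF A → Prop) : GF A → GF A → Prop
  | here {F F' : GF A} : R F F' → ReplaceAt R F F'
  | here_rev {F F' : GF A} : R F' F → ReplaceAt R F F'
  | conj_left {F F' : GF A} (G : GF A) :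
      ReplaceAt R F F' → ReplaceAt R (GF.conj F G) (GF.conj F' G)
  | conj_right (F : GF A) {G G' : GF A} :
      ReplaceAt R G G' → ReplaceAt R (GF.conj F G) (GF.conj F G')
  | disj_left {F F' : GF A} (G : GF A) :
      ReplaceAt R F F' → ReplaceAt R (GF.disj F G) (GF.disj F' G)
  | disj_right (F : GF A) {G G' : GF A} :
      ReplaceAt R G G' → ReplaceAt R (GF.disj F G) (GF.disj F G')
  | neg_congr {F F' : GF A} :
      ReplaceAt R F F' → ReplaceAt R (GF.neg F) (GF.neg F')
  | obat_left {F F' : GF A} (G : GF A) :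
      ReplaceAt R F F' → ReplaceAt R (GF.obat F G) (GF.obat F' G)
  | obat_right (F : GF A) {G G' : GF A} :
      ReplaceAt R G G' → ReplaceAt R (GF.obat F G) (GF.obat F G')

theorem valAux_distOb {A : Type} {c : A → A} (M : Frame A c) (x : GS A) (F : GF A)
    (ψ : List (GS A)) :
    M.valAux ψ (distOb x F) = min (M.I ψ x) (M.valAux (ψ ++ [x]) F) := by
  induction F with
  | base y => simp [distOb, Frame.valAux]
  | neg F _ => simp [distOb, Frame.valAux]
  | obat F G _ _ => simp [distOb, Frame.valAux]
  | conj F G ihF ihG => simp only [distOb, Frame.valAux, ihF, ihG]; omega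
  | disj F G ihF ihG => simp only [distOb, Frame.valAux, ihF, ihG]; omega

theorem UCE.distOb {A : Type} (x : GS A) {F : GF A} (hF : UCE F) :
    UCE (GradualLogic.distOb x F) := by
  induction hF with
  | base y => exact .chain (.base x y)
  | chain h => cases h with
    | base y z => exact .chain (.cons x (.base y z))
    | cons y h => exact .chain (.cons x (.cons y h))
  | conj _ _ ihF ihG => exact .conj ihF ihG
  | disj _ _ ihF ihG => exact .disj ihF ihG

theorem UCE.recursiveReduce {A : Type} (c : A → A) {F : GF A} (hF : UCE F) :
    UCE (GradualLogic.recursiveReduce c F) := by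
  induction hF with
  | base y => exact .base _
  | chain h =>
    induction h with
    | base y z => exact .disj (.base _) (UCE.distOb y (.base _))
    | cons y _ ih => exact .disj (.base _) (UCE.distOb y ih)
  | conj _ _ ihF ihG => exact .disj ihF ihG
  | disj _ _ ihF ihG => exact .conj ihF ihG

theorem valAux_le_one {A : Type} {c : A → A} (M : Frame A c) {F : GF A} (hF : UCE F)
    (ψ : List (GS A)) : M.valAux ψ F ≤ 1 := by
  have hI : ∀ ψ x, M.I ψ x ≤ 1 := fun ψ x => by have := M.I01 ψ x; omega
  induction hF with
  | base y => exact hI ψ y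
  | chain h => cases h <;> exact (min_le_left _ _).trans (hI _ _)
  | conj _ _ ihF ihG => exact (min_le_left _ _).trans ihF
  | disj _ _ ihF ihG => exact max_le ihF ihG

/-- The value relative to every traversed sequence `ψ` is needed, since the tail of a chain is
evaluated after its head. -/
theorem valAux_recursiveReduce {A : Type} {c : A → A} (M : Frame A c) {F : GF A} (hF : UCE F)
    (ψ : List (GS A)) :
    M.valAux ψ (recursiveReduce c F) = 1 - M.valAux ψ F := by
  induction hF with
  | base y => exact M.Icompl ψ y
  | chain h =>
    induction h generalizing ψ with
    | base y z =>
      simp only [recursiveReduce, Frame.valAux, valAux_distOb, M.Icompl]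
      have := M.I01 ψ y
      omega
    | cons y _ ih =>
      simp only [recursiveReduce, Frame.valAux, valAux_distOb, M.Icompl, ih]
      have := M.I01 ψ y
      omega
  | conj _ _ ihF ihG => simp only [recursiveReduce, Frame.valAux, ihF, ihG]; omega
  | disj _ _ ihF ihG => simp only [recursiveReduce, Frame.valAux, ihF, ihG]; omega

/-- Complementation/Double negation: for every F in unit chain
expansion and every valuation frame M: [M ⊨ F ∨ recursiveReduce F] = 1,
[M ⊨ F ∧ recursiveReduce F] = 0, and
[M ⊨ F] = [M ⊨ recursiveReduce (recursiveReduce F)]. -/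
theorem complementation_double_negation (A : Type) [Countable A] [Infinite A]
    (c : A → A) (hc : Function.Involutive c)
    (F : GF A) (hF : UCE F) (M : Frame A c) :
    M.val (GF.disj F (recursiveReduce c F)) = 1 ∧
    M.val (GF.conj F (recursiveReduce c F)) = 0 ∧
    M.val F = M.val (recursiveReduce c (recursiveReduce c F)) := by
  have hle := valAux_le_one M hF []
  have hneg := valAux_recursiveReduce M hF []
  have hneg2 := valAux_recursiveReduce M (hF.recursiveReduce c) []
  simp only [Frame.val, Frame.valAux]
  omega

end GradualLogic
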